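/- For (s₁,s₂,s₃) ∈ ℂ³ with Re(sᵢ) > 0 for i = 1,2,3, the integral Z(s₁,s₂,s₃) = ∫_{ℤ_p²∖{xy(x−y)=0}} |x|_p^{s₁} |y|_p^{s₂} |x−y|_p^{s₃} dx dy equals [ (1−p^{−1})² p^{−1−s₁}/(1−p^{−1−s₁}) + (1−p^{−1})² p^{−1−s₂}/(1−p^{−1−s₂}) + p^{−2}(p−1)(p−2) + p^{−2−s₃}(p−1)(1−p^{−1})/(1−p^{−1−s₃}) ] / (1 − p^{−2−s₁−s₂−s₃}). -/

import Mathlib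

open MeasureTheory Finset

noncomputable section

instance padicMS (p : ℕ) [Fact p.Prime] : MeasurableSpace ℚ_[p] := borel _
instance padicBS (p : ℕ) [Fact p.Prime] : BorelSpace ℚ_[p] := ⟨rfl⟩

/-- The closed unit ball of `ℚ_[p]` (i.e. `ℤ_[p]`) as a positive compact subset. -/
def padicBall (p : ℕ) [Fact p.Prime] : TopologicalSpace.PositiveCompacts ℚ_[p] where
  carrier := Metric.closedBall 0 1
  isCompact' := isCompact_closedBall 0 1
  interior_nonempty' := ⟨0, Metric.ball_subset_interior_closedBall (Metric.mem_ball_self one_pos)⟩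

/-- The Haar measure on `(ℚ_[p], +)`, normalized so that `ℤ_[p]` has measure `1`. -/
def padicHaar (p : ℕ) [Fact p.Prime] : Measure ℚ_[p] :=
  Measure.addHaarMeasure (padicBall p)

instance padicHaarSF (p : ℕ) [Fact p.Prime] : SigmaFinite (padicHaar p) := by
  unfold padicHaar; infer_instance

/-- The product of normalized Haar measures on a finite power of `ℚ_[p]`. -/
def padicPi (p : ℕ) [Fact p.Prime] (ι : Type) [Fintype ι] : Measure (ι → ℚ_[p]) :=
  Measure.pi fun _ => padicHaar p

/-!
The integrand `F(x, y) = |x|^s₁ |y|^s₂ |x - y|^s₃` satisfies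
`F(p • z) = p^(-s₁ - s₂ - s₃) F(z)`, while `z ↦ p • z` scales the Haar measure of `ℚ_[p]²` by `p⁻²`.
Cutting the unit ball into the annuli `‖z‖ = p⁻ⁿ` (maximum norm) therefore turns the integral into a
geometric series with ratio `p^(-2 - s₁ - s₂ - s₃)` whose first term is the integral over the unit
sphere. On the part of the sphere where exactly one of `x`, `y` is a unit, the strong triangle
inequality gives `|x - y| = 1` and the integral reduces to one variable. Where both are units,
`F(x, y) = |y - x|^s₃`, and since `ℤ_[p]` is stable under translation by `x`, the shear
`(x, y) ↦ (x, y - x)` reduces the integral to one variable again. The one-variable integral of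
`|x|^s` is another instance of the geometric series.
-/

section Dilation

open Metric

variable {𝕜 E 𝕂 : Type*} [NormedField 𝕜] [NormedAddCommGroup E] [NormedSpace 𝕜 E] [RCLike 𝕂]

/-- The annulus `r ^ (n + 1) < ‖x‖ ≤ r ^ n`. For `0 < r < 1` these annuli partition the punctured
closed unit ball. -/
def normAnnulus (E : Type*) [Norm E] (r : ℝ) (n : ℕ) : Set E :=
  norm ⁻¹' Set.Ioc (r ^ (n + 1)) (r ^ n)

lemma normAnnulus_zero (E : Type*) [SeminormedAddCommGroup E] (r : ℝ) :
    normAnnulus E r 0 = closedBall 0 1 \ closedBall 0 r := by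
  ext x
  simp [normAnnulus, and_comm]

lemma iUnion_normAnnulus {r : ℝ} (hr₀ : 0 < r) (hr₁ : r < 1) :
    ⋃ n, normAnnulus E r n = closedBall 0 1 \ {0} := by
  ext x
  simp only [normAnnulus, Set.mem_iUnion, Set.mem_preimage, Set.mem_Ioc, Set.mem_sdiff,
    mem_closedBall_zero_iff, Set.mem_singleton_iff]
  constructor
  · rintro ⟨n, hlt, hle⟩
    exact ⟨hle.trans (pow_le_one₀ hr₀.le hr₁.le), norm_pos_iff.1 ((pow_pos hr₀ _).trans hlt)⟩
  · rintro ⟨hle, hne⟩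
    exact exists_nat_pow_near_of_lt_one (norm_pos_iff.2 hne) hle hr₀ hr₁

lemma pairwise_disjoint_normAnnulus (E : Type*) [Norm E] {r : ℝ} (hr₀ : 0 ≤ r) (hr₁ : r ≤ 1) :
    Pairwise (Function.onFun Disjoint (normAnnulus E r)) := fun _ _ hmn =>
  ((pow_right_anti₀ hr₀ hr₁).pairwise_disjoint_on_Ioc_succ hmn).preimage norm

lemma measurableSet_normAnnulus (E : Type*) [SeminormedAddCommGroup E] [MeasurableSpace E]
    [OpensMeasurableSpace E] (r : ℝ) (n : ℕ) : MeasurableSet (normAnnulus E r n) :=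
  continuous_norm.measurable measurableSet_Ioc

lemma preimage_inv_smul_normAnnulus {ϖ : 𝕜} (hϖ : ϖ ≠ 0) (n : ℕ) :
    (ϖ⁻¹ • ·) ⁻¹' normAnnulus E ‖ϖ‖ n = normAnnulus E ‖ϖ‖ (n + 1) := by
  have hϖ' : 0 < ‖ϖ‖ := norm_pos_iff.2 hϖ
  ext x
  simp only [normAnnulus, Set.mem_preimage, Set.mem_Ioc, norm_smul, norm_inv,
    lt_inv_mul_iff₀ hϖ', inv_mul_le_iff₀ hϖ', ← pow_succ']

variable [MeasurableSpace E] [BorelSpace E] {μ : Measure E} {ϖ : 𝕜} {c : NNReal}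

section Homogeneous

variable {f : E → 𝕂} {a : 𝕂} (hϖ : ϖ ≠ 0) (hμ : μ.map (ϖ⁻¹ • ·) = c • μ)
  (hf : ∀ x, f (ϖ • x) = a * f x)
include hϖ hμ hf

lemma integrableOn_preimage_inv_smul {s : Set E} (hs : IntegrableOn f s μ) :
    IntegrableOn f ((ϖ⁻¹ • ·) ⁻¹' s) μ := by
  have hsmul : IntegrableOn (fun x => f (ϖ • x)) s (μ.map (ϖ⁻¹ • ·)) := by
    simp only [IntegrableOn, hμ, hf, Measure.restrict_smul]
    exact hs.smul_measure_nnreal.const_mul a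
  have h := (measurableEmbedding_const_smul₀ (inv_ne_zero hϖ)).integrableOn_map_iff.1 hsmul
  simpa only [Function.comp_def, smul_inv_smul₀ hϖ] using h

lemma setIntegral_preimage_inv_smul (s : Set E) :
    ∫ x in (ϖ⁻¹ • ·) ⁻¹' s, f x ∂μ = c • a * ∫ x in s, f x ∂μ := by
  have h := (measurableEmbedding_const_smul₀ (inv_ne_zero hϖ)).setIntegral_map (μ := μ)
    (fun x => f (ϖ • x)) s
  simp only [smul_inv_smul₀ hϖ, hf, integral_const_mul, hμ, Measure.restrict_smul,
    integral_smul_nnreal_measure] at h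
  rw [← h, smul_mul_assoc, mul_smul_comm]

lemma setIntegral_normAnnulus_eq_pow_mul (n : ℕ) :
    ∫ x in normAnnulus E ‖ϖ‖ n, f x ∂μ =
      (c • a) ^ n * ∫ x in closedBall 0 1 \ closedBall 0 ‖ϖ‖, f x ∂μ := by
  induction n with
  | zero => rw [normAnnulus_zero, pow_zero, one_mul]
  | succ n ih =>
    rw [← preimage_inv_smul_normAnnulus hϖ, setIntegral_preimage_inv_smul hϖ hμ hf, ih]
    ring

variable (hca : ‖c • a‖ < 1) (hint : IntegrableOn f (closedBall 0 1 \ closedBall 0 ‖ϖ‖) μ)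
include hca hint

lemma integrableOn_iUnion_normAnnulus : IntegrableOn f (⋃ n, normAnnulus E ‖ϖ‖ n) μ := by
  have hnorm : ∀ x, ‖f (ϖ • x)‖ = ‖a‖ * ‖f x‖ := fun x => by rw [hf, norm_mul]
  refine integrableOn_iUnion_of_summable_integral_norm (fun n => ?_) ?_
  · induction n with
    | zero => rwa [normAnnulus_zero]
    | succ n ih =>
      rw [← preimage_inv_smul_normAnnulus hϖ]
      exact integrableOn_preimage_inv_smul hϖ hμ hf ih
  · simp only [setIntegral_normAnnulus_eq_pow_mul (f := fun x => ‖f x‖) hϖ hμ hnorm]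
    refine (summable_geometric_of_lt_one (by positivity) ?_).mul_right _
    simpa only [NNReal.smul_def, norm_smul, NNReal.norm_eq, smul_eq_mul] using hca

variable [NullSingletonClass μ] (hϖ₁ : ‖ϖ‖ < 1)
include hϖ₁

lemma integrableOn_closedBall_of_homogeneous : IntegrableOn f (closedBall 0 1) μ := by
  have h := integrableOn_iUnion_normAnnulus hϖ hμ hf hca hint
  rw [iUnion_normAnnulus (norm_pos_iff.2 hϖ) hϖ₁] at h
  exact h.congr_set_ae (sdiff_null_ae_eq_self (measure_singleton 0)).symm

lemma setIntegral_closedBall_of_homogeneous :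
    ∫ x in closedBall 0 1, f x ∂μ =
      (∫ x in closedBall 0 1 \ closedBall 0 ‖ϖ‖, f x ∂μ) / (1 - c • a) := by
  have hU := iUnion_normAnnulus (E := E) (norm_pos_iff.2 hϖ) hϖ₁
  have hsum := hasSum_integral_iUnion (measurableSet_normAnnulus E ‖ϖ‖)
    (pairwise_disjoint_normAnnulus E (norm_nonneg ϖ) hϖ₁.le)
    (integrableOn_iUnion_normAnnulus hϖ hμ hf hca hint)
  simp only [setIntegral_normAnnulus_eq_pow_mul hϖ hμ hf] at hsum
  rw [← setIntegral_congr_set (sdiff_null_ae_eq_self (measure_singleton (0 : E))), ← hU,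
    hsum.unique ((hasSum_geometric_of_norm_lt_one hca).mul_right _), inv_mul_eq_div]

end Homogeneous

end Dilation

section Product

open Metric

variable {E F G : Type*}

lemma sphere_prod_eq_union [PseudoMetricSpace E] [PseudoMetricSpace F] (x : E) (y : F) (r : ℝ) :
    sphere (x, y) r =
      ball x r ×ˢ sphere y r ∪ sphere x r ×ˢ ball y r ∪ sphere x r ×ˢ sphere y r := by
  rw [sphere_prod, ← ball_union_sphere, ← ball_union_sphere, Set.prod_union, Set.union_prod]
  ext z
  simp only [Set.mem_union]
  tauto

lemma setIntegral_sphere_prod [PseudoMetricSpace E] [PseudoMetricSpace F] [MeasurableSpace E]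
    [OpensMeasurableSpace E] [MeasurableSpace F] [OpensMeasurableSpace F] [NormedAddCommGroup G]
    [NormedSpace ℝ G] {μ : Measure (E × F)} {f : E × F → G} {x : E} {y : F} {r : ℝ}
    (hf : IntegrableOn f (sphere (x, y) r) μ) :
    ∫ z in sphere (x, y) r, f z ∂μ =
      ∫ z in ball x r ×ˢ sphere y r, f z ∂μ + ∫ z in sphere x r ×ˢ ball y r, f z ∂μ +
        ∫ z in sphere x r ×ˢ sphere y r, f z ∂μ := by
  have hx : MeasurableSet (sphere x r) := isClosed_sphere.measurableSet
  have hy : MeasurableSet (sphere y r) := isClosed_sphere.measurableSet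
  have hdx : Disjoint (ball x r) (sphere x r) := sphere_disjoint_ball.symm
  have hdy : Disjoint (ball y r) (sphere y r) := sphere_disjoint_ball.symm
  rw [sphere_prod_eq_union] at hf ⊢
  rw [setIntegral_union (Set.disjoint_union_left.2
      ⟨Set.disjoint_prod.2 (.inl hdx), Set.disjoint_prod.2 (.inr hdy)⟩) (hx.prod hy)
      hf.left_of_union hf.right_of_union,
    setIntegral_union
      (Set.disjoint_prod.2 (.inl hdx)) (hx.prod measurableSet_ball)
      hf.left_of_union.left_of_union hf.left_of_union.right_of_union]

end Product

section Ultrametric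

open Metric

variable {E F : Type*} [SeminormedAddCommGroup E] [IsUltrametricDist E]

lemma norm_sub_eq_right_of_norm_lt {x y : E} (h : ‖x‖ < ‖y‖) : ‖x - y‖ = ‖y‖ := by
  rw [sub_eq_add_neg, IsUltrametricDist.norm_add_eq_max_of_norm_ne_norm (by simpa using h.ne),
    norm_neg, max_eq_right h.le]

lemma preimage_shear_prod_closedBall {s : Set E} {r : ℝ} (hs : s ⊆ closedBall 0 r) :
    (fun z : E × E => (z.1, z.2 - z.1)) ⁻¹' (s ×ˢ closedBall 0 r) = s ×ˢ closedBall 0 r := by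
  ext ⟨x, y⟩
  simp only [Set.mem_preimage, Set.mem_prod, and_congr_right_iff, mem_closedBall_zero_iff]
  intro hx
  have hxr : ‖x‖ ≤ r := mem_closedBall_zero_iff.1 (hs hx)
  constructor <;> intro h
  · simpa using (IsUltrametricDist.norm_add_le_max (y - x) x).trans (max_le h hxr)
  · simpa [← sub_eq_add_neg] using
      (IsUltrametricDist.norm_add_le_max y (-x)).trans (max_le h (by rwa [norm_neg]))

variable [MeasurableSpace E] [BorelSpace E] [SecondCountableTopology E] [NormedAddCommGroup F]
  {μ ν : Measure E} [SFinite μ] [SFinite ν] [ν.IsAddRightInvariant] {s : Set E} {r : ℝ}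

lemma integrableOn_prod_closedBall_comp_sub (hs : s ⊆ closedBall 0 r) {g : E → F}
    (hg : IntegrableOn (fun z => g z.2) (s ×ˢ closedBall 0 r) (μ.prod ν)) :
    IntegrableOn (fun z => g (z.2 - z.1)) (s ×ˢ closedBall 0 r) (μ.prod ν) := by
  have h := (measurePreserving_prod_sub μ ν).integrableOn_comp_preimage
    (MeasurableEquiv.shearSubRight E).measurableEmbedding |>.2 hg
  rwa [preimage_shear_prod_closedBall hs] at h

lemma setIntegral_prod_closedBall_comp_sub [NormedSpace ℝ F] (hs : s ⊆ closedBall 0 r)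
    (g : E → F) :
    ∫ z in s ×ˢ closedBall 0 r, g (z.2 - z.1) ∂μ.prod ν =
      ∫ z in s ×ˢ closedBall 0 r, g z.2 ∂μ.prod ν := by
  have h := (measurePreserving_prod_sub μ ν).setIntegral_preimage_emb
    (MeasurableEquiv.shearSubRight E).measurableEmbedding (fun z => g z.2) (s ×ˢ closedBall 0 r)
  rwa [preimage_shear_prod_closedBall hs] at h

end Ultrametric

section PadicHaar

open Metric

variable (p : ℕ) [hp : Fact p.Prime]

instance padicHaar_isAddHaarMeasure : (padicHaar p).IsAddHaarMeasure := by
  unfold padicHaar; infer_instance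

lemma padicHaar_closedBall_one : padicHaar p (closedBall 0 1) = 1 :=
  Measure.addHaarMeasure_self (K₀ := padicBall p)

lemma padic_closedBall_norm_natCast_eq_ball : closedBall (0 : ℚ_[p]) ‖(p : ℚ_[p])‖ = ball 0 1 := by
  ext x
  have h := Padic.norm_le_pow_iff_norm_lt_pow_add_one x (-1)
  rw [zpow_neg_one, neg_add_cancel, zpow_zero] at h
  simpa using h

lemma preimage_inv_smul_padic_closedBall_one :
    ((p : ℚ_[p])⁻¹ • ·) ⁻¹' closedBall (0 : ℚ_[p]) 1 = ball 0 1 := by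
  have hp₀ : (p : ℚ_[p]) ≠ 0 := Nat.cast_ne_zero.2 hp.out.ne_zero
  rw [Set.preimage_smul_inv₀ hp₀, smul_closedBall' hp₀, smul_zero, mul_one,
    padic_closedBall_norm_natCast_eq_ball]

lemma padic_prod_closedBall_norm_natCast_eq_ball :
    closedBall (0 : ℚ_[p] × ℚ_[p]) ‖(p : ℚ_[p])‖ = ball 0 1 := by
  rw [← Prod.mk_zero_zero, ← closedBall_prod_same, padic_closedBall_norm_natCast_eq_ball,
    ball_prod_same]

lemma padic_closedBall_one_eq_iUnion_ball :
    closedBall (0 : ℚ_[p]) 1 = ⋃ n ∈ Finset.range p, ball (n : ℚ_[p]) 1 := by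
  ext x
  simp only [mem_closedBall_zero_iff, Finset.mem_range, Set.mem_iUnion, mem_ball, dist_eq_norm,
    exists_prop]
  constructor
  · intro hx
    obtain ⟨x, rfl⟩ : ∃ z : ℤ_[p], (z : ℚ_[p]) = x := ⟨⟨x, hx⟩, rfl⟩
    obtain ⟨n, hn, h⟩ := PadicInt.exists_mem_range x
    rw [IsLocalRing.mem_maximalIdeal, PadicInt.mem_nonunits, PadicInt.norm_def,
      PadicInt.coe_sub, PadicInt.coe_natCast] at h
    exact ⟨n, hn, h⟩
  · rintro ⟨n, -, h⟩
    have hn : ‖(n : ℚ_[p])‖ ≤ 1 := by simpa using Padic.norm_int_le_one (p := p) n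
    simpa using (IsUltrametricDist.norm_add_le_max (x - n) (n : ℚ_[p])).trans (max_le h.le hn)

lemma pairwiseDisjoint_padic_ball_natCast :
    (Finset.range p : Set ℕ).PairwiseDisjoint fun n => ball (n : ℚ_[p]) 1 := by
  intro m hm n hn hmn
  rw [Finset.coe_range, Set.mem_Iio] at hm hn
  refine (IsUltrametricDist.ball_eq_or_disjoint _ _ _).resolve_left fun h => hmn ?_
  have hmem : (n : ℚ_[p]) ∈ ball (m : ℚ_[p]) 1 := h ▸ mem_ball_self one_pos
  have hlt : ‖(((n : ℤ) - m : ℤ) : ℚ_[p])‖ < 1 := by simpa [dist_eq_norm] using hmem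
  exact (Nat.modEq_iff_dvd.2 ((Padic.norm_intCast_lt_one_iff).1 hlt)).eq_of_lt_of_lt hm hn

lemma padicHaar_ball_one : padicHaar p (ball 0 1) = (p : ENNReal)⁻¹ := by
  have h := padicHaar_closedBall_one p
  rw [padic_closedBall_one_eq_iUnion_ball,
    measure_biUnion_finset (pairwiseDisjoint_padic_ball_natCast p) fun _ _ => measurableSet_ball]
    at h
  simp only [Measure.addHaar_ball_center, Finset.sum_const, Finset.card_range, nsmul_eq_mul] at h
  exact ENNReal.eq_inv_of_mul_eq_one_left (by rwa [mul_comm])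

lemma padicHaar_real_ball_one : (padicHaar p).real (ball 0 1) = (p : ℝ)⁻¹ := by
  simp [Measure.real, padicHaar_ball_one]

lemma padicHaar_real_sphere_one : (padicHaar p).real (sphere 0 1) = 1 - (p : ℝ)⁻¹ := by
  rw [← closedBall_sdiff_ball, measureReal_sdiff ball_subset_closedBall measurableSet_ball
    (by simp [padicHaar_closedBall_one]), padicHaar_real_ball_one, Measure.real,
    padicHaar_closedBall_one, ENNReal.toReal_one]

lemma map_inv_smul_padicHaar :
    (padicHaar p).map ((p : ℚ_[p])⁻¹ • ·) = (p : NNReal)⁻¹ • padicHaar p := by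
  have hp₀ : (p : ℚ_[p]) ≠ 0 := Nat.cast_ne_zero.2 hp.out.ne_zero
  let e : ℚ_[p] ≃ₜ ℚ_[p] := Homeomorph.smulOfNeZero _ (inv_ne_zero hp₀)
  have hinv : ((padicHaar p).map ((p : ℚ_[p])⁻¹ • ·)).IsAddLeftInvariant :=
    isAddLeftInvariant_map (AddMonoidHom.mulLeft (p : ℚ_[p])⁻¹).toAddHom
      e.continuous.measurable e.surjective
  have hfin : SigmaFinite ((padicHaar p).map ((p : ℚ_[p])⁻¹ • ·)) :=
    e.toMeasurableEquiv.sigmaFinite_map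
  have hunit : (padicHaar p).map ((p : ℚ_[p])⁻¹ • ·) (padicBall p) = (p : ENNReal)⁻¹ := by
    rw [Measure.map_apply (measurable_const_smul _) (padicBall p).isCompact.measurableSet,
      ← padicHaar_ball_one, ← preimage_inv_smul_padic_closedBall_one]
    rfl
  rw [Measure.addHaarMeasure_unique ((padicHaar p).map ((p : ℚ_[p])⁻¹ • ·)) (padicBall p), hunit,
    ← padicHaar, ENNReal.smul_def]
  simp [hp.out.ne_zero]

lemma map_inv_smul_padicHaar_prod :
    ((padicHaar p).prod (padicHaar p)).map ((p : ℚ_[p])⁻¹ • ·) =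
      (p : NNReal)⁻¹ ^ 2 • (padicHaar p).prod (padicHaar p) := by
  have h := Measure.map_prod_map (padicHaar p) (padicHaar p)
    (measurable_const_smul (p : ℚ_[p])⁻¹) (measurable_const_smul (p : ℚ_[p])⁻¹)
  rw [map_inv_smul_padicHaar, Measure.prod_smul_left, Measure.prod_smul_right, smul_smul,
    ← sq] at h
  exact h.symm

end PadicHaar

section NatCastCpow

variable {n : ℕ}

lemma nnreal_inv_pow_smul_natCast_cpow_neg (hn : n ≠ 0) (d : ℕ) (s : ℂ) :
    (n : NNReal)⁻¹ ^ d • (n : ℂ) ^ (-s) = (n : ℂ) ^ (-(d : ℂ) - s) := by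
  rw [sub_eq_add_neg, Complex.cpow_add _ _ (Nat.cast_ne_zero.2 hn), Complex.cpow_neg _ (d : ℂ),
    Complex.cpow_natCast, NNReal.smul_def, Complex.real_smul]
  push_cast
  rw [inv_pow]

lemma norm_natCast_cpow_lt_one (hn : 1 < n) {s : ℂ} (hs : s.re < 0) : ‖(n : ℂ) ^ s‖ < 1 := by
  rw [Complex.norm_natCast_cpow_of_pos (one_pos.trans hn)]
  exact Real.rpow_lt_one_of_one_lt_of_neg (by exact_mod_cast hn) hs

lemma one_sub_natCast_cpow_ne_zero (hn : 1 < n) {s : ℂ} (hs : s.re < 0) :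
    1 - (n : ℂ) ^ s ≠ 0 := fun h => by
  simpa [← sub_eq_zero.1 h] using norm_natCast_cpow_lt_one hn hs

lemma nnreal_inv_smul_natCast_cpow_neg (hn : n ≠ 0) (s : ℂ) :
    (n : NNReal)⁻¹ • (n : ℂ) ^ (-s) = (n : ℂ) ^ (-1 - s) := by
  simpa using nnreal_inv_pow_smul_natCast_cpow_neg hn 1 s

lemma nnreal_inv_sq_smul_natCast_cpow_neg_add (hn : n ≠ 0) (s₁ s₂ s₃ : ℂ) :
    (n : NNReal)⁻¹ ^ 2 • (n : ℂ) ^ (-(s₁ + s₂ + s₃)) = (n : ℂ) ^ (-2 - s₁ - s₂ - s₃) := by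
  rw [nnreal_inv_pow_smul_natCast_cpow_neg hn, Nat.cast_ofNat, sub_sub, sub_sub, add_assoc]

lemma norm_nnreal_inv_pow_smul_natCast_cpow_neg_lt_one (hn : 1 < n) {d : ℕ} {s : ℂ}
    (hs : -(d : ℝ) < s.re) : ‖(n : NNReal)⁻¹ ^ d • (n : ℂ) ^ (-s)‖ < 1 := by
  rw [nnreal_inv_pow_smul_natCast_cpow_neg (one_pos.trans hn).ne']
  exact norm_natCast_cpow_lt_one hn (by simpa [neg_lt] using hs)

lemma norm_nnreal_inv_smul_natCast_cpow_neg_lt_one (hn : 1 < n) {s : ℂ} (hs : -1 < s.re) :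
    ‖(n : NNReal)⁻¹ • (n : ℂ) ^ (-s)‖ < 1 := by
  simpa only [pow_one] using
    norm_nnreal_inv_pow_smul_natCast_cpow_neg_lt_one hn (d := 1) (by simpa using hs)

lemma one_sub_inv_sq_div_sub_eq_natCast_cpow_add (hn : n ≠ 0) {s : ℂ}
    (hs : 1 - (n : ℂ) ^ (-1 - s) ≠ 0) :
    (1 - (n : ℂ)⁻¹) ^ 2 / (1 - (n : ℂ) ^ (-1 - s)) - (1 - (n : ℂ)⁻¹) * (n : ℂ)⁻¹ =
      (n : ℂ) ^ (-2 : ℂ) * ((n : ℂ) - 1) * ((n : ℂ) - 2) +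
        (n : ℂ) ^ (-2 - s) * ((n : ℂ) - 1) * (1 - (n : ℂ)⁻¹) / (1 - (n : ℂ) ^ (-1 - s)) := by
  have hn' : (n : ℂ) ≠ 0 := Nat.cast_ne_zero.2 hn
  rw [show (-2 : ℂ) - s = -1 + (-1 - s) by ring, Complex.cpow_add _ _ hn',
    show (-2 : ℂ) = -1 + -1 by ring, Complex.cpow_add _ _ hn', Complex.cpow_neg_one]
  field_simp
  ring

end NatCastCpow

section PadicCpow

open Metric

lemma eqOn_cpow_norm_sphere_one (E : Type*) [SeminormedAddCommGroup E] (s : ℂ) :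
    Set.EqOn (fun x : E => (‖x‖ : ℂ) ^ s) (fun _ => 1) (sphere 0 1) := fun x hx => by
  simp [mem_sphere_zero_iff_norm.1 hx]

lemma eqOn_cpow_norm_sub_sphere_prod_ball (E : Type*) [SeminormedAddCommGroup E]
    [IsUltrametricDist E] (s : ℂ) :
    Set.EqOn (fun x : E × E => (‖x.2 - x.1‖ : ℂ) ^ s) (fun _ => 1)
      (sphere 0 1 ×ˢ ball 0 1) := by
  rintro ⟨x, y⟩ ⟨hx, hy⟩
  rw [mem_sphere_zero_iff_norm] at hx
  rw [mem_ball_zero_iff] at hy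
  simp [norm_sub_eq_right_of_norm_lt (hy.trans_eq hx.symm), hx]

variable (p : ℕ) [hp : Fact p.Prime] {s : ℂ}

lemma padic_cpow_norm_natCast_mul (s : ℂ) (x : ℚ_[p]) :
    (‖(p : ℚ_[p]) * x‖ : ℂ) ^ s = (p : ℂ) ^ (-s) * (‖x‖ : ℂ) ^ s := by
  rw [norm_mul, Complex.ofReal_mul, Complex.mul_cpow_ofReal_nonneg (norm_nonneg _) (norm_nonneg _),
    Padic.norm_p, Complex.ofReal_inv, Complex.ofReal_natCast,
    Complex.inv_cpow _ _ (by simp [Complex.natCast_arg, Real.pi_ne_zero.symm]), Complex.cpow_neg]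

lemma integrableOn_one_padic_sphere_one :
    IntegrableOn (fun _ => (1 : ℂ)) (sphere 0 1) (padicHaar p) :=
  integrableOn_const (isCompact_sphere _ _).measure_lt_top.ne

lemma setIntegral_one_padic_sphere_one :
    ∫ _ in sphere 0 1, (1 : ℂ) ∂padicHaar p = 1 - (p : ℂ)⁻¹ := by
  simp [padicHaar_real_sphere_one]

lemma integrableOn_cpow_norm_padic_closedBall_one (hs : -1 < s.re) :
    IntegrableOn (fun x => (‖x‖ : ℂ) ^ s) (closedBall 0 1) (padicHaar p) := by
  refine integrableOn_closedBall_of_homogeneous (Nat.cast_ne_zero.2 hp.out.ne_zero)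
    (map_inv_smul_padicHaar p) (padic_cpow_norm_natCast_mul p s)
    (norm_nnreal_inv_smul_natCast_cpow_neg_lt_one hp.out.one_lt hs) ?_ Padic.norm_p_lt_one
  rw [padic_closedBall_norm_natCast_eq_ball, closedBall_sdiff_ball]
  exact (integrableOn_one_padic_sphere_one p).congr_fun (eqOn_cpow_norm_sphere_one ℚ_[p] s).symm
    isClosed_sphere.measurableSet

lemma setIntegral_cpow_norm_padic_closedBall_one (hs : -1 < s.re) :
    ∫ x in closedBall 0 1, (‖x‖ : ℂ) ^ s ∂padicHaar p =
      (1 - (p : ℂ)⁻¹) / (1 - (p : ℂ) ^ (-1 - s)) := by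
  rw [setIntegral_closedBall_of_homogeneous (Nat.cast_ne_zero.2 hp.out.ne_zero)
    (map_inv_smul_padicHaar p) (padic_cpow_norm_natCast_mul p s)
    (norm_nnreal_inv_smul_natCast_cpow_neg_lt_one hp.out.one_lt hs)
    ((integrableOn_cpow_norm_padic_closedBall_one p hs).mono_set Set.sdiff_subset)
    Padic.norm_p_lt_one, padic_closedBall_norm_natCast_eq_ball, closedBall_sdiff_ball,
    setIntegral_congr_fun isClosed_sphere.measurableSet (eqOn_cpow_norm_sphere_one ℚ_[p] s),
    setIntegral_one_padic_sphere_one, nnreal_inv_smul_natCast_cpow_neg hp.out.ne_zero]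

lemma setIntegral_cpow_norm_padic_ball_one (hs : -1 < s.re) :
    ∫ x in ball 0 1, (‖x‖ : ℂ) ^ s ∂padicHaar p =
      (1 - (p : ℂ)⁻¹) * (p : ℂ) ^ (-1 - s) / (1 - (p : ℂ) ^ (-1 - s)) := by
  rw [← preimage_inv_smul_padic_closedBall_one, setIntegral_preimage_inv_smul
    (Nat.cast_ne_zero.2 hp.out.ne_zero) (map_inv_smul_padicHaar p)
    (padic_cpow_norm_natCast_mul p s), setIntegral_cpow_norm_padic_closedBall_one p hs,
    nnreal_inv_smul_natCast_cpow_neg hp.out.ne_zero]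
  ring

end PadicCpow

section FourPoint

open Metric

variable (p : ℕ) [hp : Fact p.Prime] (s₁ s₂ s₃ : ℂ)

/-- The integrand `|x|^s₁ |y|^s₂ |x - y|^s₃` of the four-point zeta function `Z(s₁, s₂, s₃)`, as a
function of `(x, y) ∈ ℚ_[p]²`. -/
def fourPointIntegrand (x : ℚ_[p] × ℚ_[p]) : ℂ :=
  (‖x.1‖ : ℂ) ^ s₁ * (‖x.2‖ : ℂ) ^ s₂ * (‖x.1 - x.2‖ : ℂ) ^ s₃

lemma fourPointIntegrand_natCast_smul (x : ℚ_[p] × ℚ_[p]) :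
    fourPointIntegrand p s₁ s₂ s₃ ((p : ℚ_[p]) • x) =
      (p : ℂ) ^ (-(s₁ + s₂ + s₃)) * fourPointIntegrand p s₁ s₂ s₃ x := by
  simp only [fourPointIntegrand, Prod.smul_fst, Prod.smul_snd, smul_eq_mul, ← mul_sub,
    padic_cpow_norm_natCast_mul, neg_add, Complex.cpow_add _ _ (Nat.cast_ne_zero.2 hp.out.ne_zero)]
  ring

lemma eqOn_fourPointIntegrand_ball_prod_sphere :
    Set.EqOn (fourPointIntegrand p s₁ s₂ s₃) (fun x => (‖x.1‖ : ℂ) ^ s₁ * 1)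
      (ball 0 1 ×ˢ sphere 0 1) := by
  rintro ⟨x, y⟩ ⟨hx, hy⟩
  rw [mem_ball_zero_iff] at hx
  rw [mem_sphere_zero_iff_norm] at hy
  simp [fourPointIntegrand, norm_sub_eq_right_of_norm_lt (hx.trans_eq hy.symm), hy]

lemma eqOn_fourPointIntegrand_sphere_prod_ball :
    Set.EqOn (fourPointIntegrand p s₁ s₂ s₃) (fun x => 1 * (‖x.2‖ : ℂ) ^ s₂)
      (sphere 0 1 ×ˢ ball 0 1) := by
  rintro ⟨x, y⟩ ⟨hx, hy⟩
  rw [mem_sphere_zero_iff_norm] at hx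
  rw [mem_ball_zero_iff] at hy
  simp [fourPointIntegrand, norm_sub_rev x y,
    norm_sub_eq_right_of_norm_lt (hy.trans_eq hx.symm), hx]

lemma eqOn_fourPointIntegrand_sphere_prod_sphere :
    Set.EqOn (fourPointIntegrand p s₁ s₂ s₃) (fun x => (‖x.2 - x.1‖ : ℂ) ^ s₃)
      (sphere 0 1 ×ˢ sphere 0 1) := by
  rintro ⟨x, y⟩ ⟨hx, hy⟩
  rw [mem_sphere_zero_iff_norm] at hx hy
  simp [fourPointIntegrand, hx, hy, norm_sub_rev x y]

variable {s₁ s₂ s₃}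

lemma integrableOn_fourPointIntegrand_ball_prod_sphere (h₁ : -1 < s₁.re) :
    IntegrableOn (fourPointIntegrand p s₁ s₂ s₃) (ball 0 1 ×ˢ sphere 0 1)
      ((padicHaar p).prod (padicHaar p)) := by
  refine IntegrableOn.congr_fun ?_ (eqOn_fourPointIntegrand_ball_prod_sphere p s₁ s₂ s₃).symm
    (measurableSet_ball.prod isClosed_sphere.measurableSet)
  rw [IntegrableOn, ← Measure.prod_restrict]
  exact ((integrableOn_cpow_norm_padic_closedBall_one p h₁).mono_set
    ball_subset_closedBall).mul_prod (integrableOn_one_padic_sphere_one p)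

lemma setIntegral_fourPointIntegrand_ball_prod_sphere (h₁ : -1 < s₁.re) :
    ∫ x in ball 0 1 ×ˢ sphere 0 1, fourPointIntegrand p s₁ s₂ s₃ x
        ∂(padicHaar p).prod (padicHaar p) =
      (1 - (p : ℂ)⁻¹) ^ 2 * (p : ℂ) ^ (-1 - s₁) / (1 - (p : ℂ) ^ (-1 - s₁)) := by
  rw [setIntegral_congr_fun (measurableSet_ball.prod isClosed_sphere.measurableSet)
      (eqOn_fourPointIntegrand_ball_prod_sphere p s₁ s₂ s₃),
    setIntegral_prod_mul (fun x => (‖x‖ : ℂ) ^ s₁) (fun _ => 1),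
    setIntegral_cpow_norm_padic_ball_one p h₁, setIntegral_one_padic_sphere_one]
  ring

lemma integrableOn_fourPointIntegrand_sphere_prod_ball (h₂ : -1 < s₂.re) :
    IntegrableOn (fourPointIntegrand p s₁ s₂ s₃) (sphere 0 1 ×ˢ ball 0 1)
      ((padicHaar p).prod (padicHaar p)) := by
  refine IntegrableOn.congr_fun ?_ (eqOn_fourPointIntegrand_sphere_prod_ball p s₁ s₂ s₃).symm
    (isClosed_sphere.measurableSet.prod measurableSet_ball)
  rw [IntegrableOn, ← Measure.prod_restrict]
  exact (integrableOn_one_padic_sphere_one p).mul_prod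
    ((integrableOn_cpow_norm_padic_closedBall_one p h₂).mono_set ball_subset_closedBall)

lemma setIntegral_fourPointIntegrand_sphere_prod_ball (h₂ : -1 < s₂.re) :
    ∫ x in sphere 0 1 ×ˢ ball 0 1, fourPointIntegrand p s₁ s₂ s₃ x
        ∂(padicHaar p).prod (padicHaar p) =
      (1 - (p : ℂ)⁻¹) ^ 2 * (p : ℂ) ^ (-1 - s₂) / (1 - (p : ℂ) ^ (-1 - s₂)) := by
  rw [setIntegral_congr_fun (isClosed_sphere.measurableSet.prod measurableSet_ball)
      (eqOn_fourPointIntegrand_sphere_prod_ball p s₁ s₂ s₃),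
    setIntegral_prod_mul (fun _ => 1) (fun y => (‖y‖ : ℂ) ^ s₂),
    setIntegral_cpow_norm_padic_ball_one p h₂, setIntegral_one_padic_sphere_one]
  ring

lemma integrableOn_cpow_norm_sub_sphere_prod_closedBall {s : ℂ} (hs : -1 < s.re) :
    IntegrableOn (fun x => (‖x.2 - x.1‖ : ℂ) ^ s) (sphere 0 1 ×ˢ closedBall 0 1)
      ((padicHaar p).prod (padicHaar p)) := by
  refine integrableOn_prod_closedBall_comp_sub sphere_subset_closedBall
    (g := fun y => (‖y‖ : ℂ) ^ s) ?_
  rw [IntegrableOn, ← Measure.prod_restrict]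
  simpa using (integrableOn_one_padic_sphere_one p).mul_prod
    (integrableOn_cpow_norm_padic_closedBall_one p hs)

lemma setIntegral_cpow_norm_sub_sphere_prod_closedBall {s : ℂ} (hs : -1 < s.re) :
    ∫ x in sphere 0 1 ×ˢ closedBall 0 1, (‖x.2 - x.1‖ : ℂ) ^ s
        ∂(padicHaar p).prod (padicHaar p) =
      (1 - (p : ℂ)⁻¹) ^ 2 / (1 - (p : ℂ) ^ (-1 - s)) := by
  have h := setIntegral_prod_mul (μ := padicHaar p) (ν := padicHaar p) (fun _ => 1)
    (fun y => (‖y‖ : ℂ) ^ s) (sphere 0 1) (closedBall 0 1)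
  simp only [one_mul] at h
  rw [setIntegral_prod_closedBall_comp_sub sphere_subset_closedBall (fun y => (‖y‖ : ℂ) ^ s), h,
    setIntegral_one_padic_sphere_one, setIntegral_cpow_norm_padic_closedBall_one p hs]
  ring

lemma setIntegral_cpow_norm_sub_sphere_prod_ball (s : ℂ) :
    ∫ x in sphere 0 1 ×ˢ ball 0 1, (‖x.2 - x.1‖ : ℂ) ^ s ∂(padicHaar p).prod (padicHaar p) =
      (1 - (p : ℂ)⁻¹) * (p : ℂ)⁻¹ := by
  rw [setIntegral_congr_fun (isClosed_sphere.measurableSet.prod measurableSet_ball)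
    (eqOn_cpow_norm_sub_sphere_prod_ball ℚ_[p] s), setIntegral_const, measureReal_prod_prod,
    padicHaar_real_sphere_one, padicHaar_real_ball_one]
  simp

lemma integrableOn_fourPointIntegrand_sphere_prod_sphere (h₃ : -1 < s₃.re) :
    IntegrableOn (fourPointIntegrand p s₁ s₂ s₃) (sphere 0 1 ×ˢ sphere 0 1)
      ((padicHaar p).prod (padicHaar p)) :=
  ((integrableOn_cpow_norm_sub_sphere_prod_closedBall p h₃).mono_set
    (Set.prod_mono_right sphere_subset_closedBall)).congr_fun
    (eqOn_fourPointIntegrand_sphere_prod_sphere p s₁ s₂ s₃).symm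
    (isClosed_sphere.measurableSet.prod isClosed_sphere.measurableSet)

lemma setIntegral_fourPointIntegrand_sphere_prod_sphere (h₃ : -1 < s₃.re) :
    ∫ x in sphere 0 1 ×ˢ sphere 0 1, fourPointIntegrand p s₁ s₂ s₃ x
        ∂(padicHaar p).prod (padicHaar p) =
      (1 - (p : ℂ)⁻¹) ^ 2 / (1 - (p : ℂ) ^ (-1 - s₃)) - (1 - (p : ℂ)⁻¹) * (p : ℂ)⁻¹ := by
  have hms : MeasurableSet (sphere (0 : ℚ_[p]) 1) := isClosed_sphere.measurableSet
  have hint := integrableOn_cpow_norm_sub_sphere_prod_closedBall p h₃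
  rw [setIntegral_congr_fun (hms.prod hms) (eqOn_fourPointIntegrand_sphere_prod_sphere p s₁ s₂ s₃),
    ← setIntegral_cpow_norm_sub_sphere_prod_closedBall p h₃,
    ← setIntegral_cpow_norm_sub_sphere_prod_ball p s₃, eq_sub_iff_add_eq',
    ← setIntegral_union (Set.disjoint_prod.2 (.inr sphere_disjoint_ball.symm)) (hms.prod hms)
      (hint.mono_set (Set.prod_mono_right ball_subset_closedBall))
      (hint.mono_set (Set.prod_mono_right sphere_subset_closedBall)),
    ← Set.prod_union, ball_union_sphere]

lemma integrableOn_fourPointIntegrand_sphere_one (h₁ : -1 < s₁.re) (h₂ : -1 < s₂.re)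
    (h₃ : -1 < s₃.re) :
    IntegrableOn (fourPointIntegrand p s₁ s₂ s₃) (sphere 0 1)
      ((padicHaar p).prod (padicHaar p)) := by
  rw [← Prod.mk_zero_zero, sphere_prod_eq_union]
  exact ((integrableOn_fourPointIntegrand_ball_prod_sphere p h₁).union
    (integrableOn_fourPointIntegrand_sphere_prod_ball p h₂)).union
    (integrableOn_fourPointIntegrand_sphere_prod_sphere p h₃)

lemma setIntegral_fourPointIntegrand_sphere_one (h₁ : -1 < s₁.re) (h₂ : -1 < s₂.re)
    (h₃ : -1 < s₃.re) :
    ∫ x in sphere 0 1, fourPointIntegrand p s₁ s₂ s₃ x ∂(padicHaar p).prod (padicHaar p) =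
      (1 - (p : ℂ)⁻¹) ^ 2 * (p : ℂ) ^ (-1 - s₁) / (1 - (p : ℂ) ^ (-1 - s₁)) +
        (1 - (p : ℂ)⁻¹) ^ 2 * (p : ℂ) ^ (-1 - s₂) / (1 - (p : ℂ) ^ (-1 - s₂)) +
        (p : ℂ) ^ (-2 : ℂ) * ((p : ℂ) - 1) * ((p : ℂ) - 2) +
        (p : ℂ) ^ (-2 - s₃) * ((p : ℂ) - 1) * (1 - (p : ℂ)⁻¹) / (1 - (p : ℂ) ^ (-1 - s₃)) := by
  have hint := integrableOn_fourPointIntegrand_sphere_one p h₁ h₂ h₃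
  rw [← Prod.mk_zero_zero] at hint ⊢
  rw [setIntegral_sphere_prod hint, setIntegral_fourPointIntegrand_ball_prod_sphere p h₁,
    setIntegral_fourPointIntegrand_sphere_prod_ball p h₂,
    setIntegral_fourPointIntegrand_sphere_prod_sphere p h₃,
    one_sub_inv_sq_div_sub_eq_natCast_cpow_add hp.out.ne_zero
      (one_sub_natCast_cpow_ne_zero hp.out.one_lt (by simpa [neg_lt] using h₃)), ← add_assoc]

lemma integrableOn_fourPointIntegrand_closedBall_one (h₁ : -1 < s₁.re) (h₂ : -1 < s₂.re)
    (h₃ : -1 < s₃.re) (h : -2 < (s₁ + s₂ + s₃).re) :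
    IntegrableOn (fourPointIntegrand p s₁ s₂ s₃) (closedBall 0 1)
      ((padicHaar p).prod (padicHaar p)) := by
  refine integrableOn_closedBall_of_homogeneous (Nat.cast_ne_zero.2 hp.out.ne_zero)
    (map_inv_smul_padicHaar_prod p) (fourPointIntegrand_natCast_smul p s₁ s₂ s₃)
    (norm_nnreal_inv_pow_smul_natCast_cpow_neg_lt_one hp.out.one_lt h) ?_ Padic.norm_p_lt_one
  rw [padic_prod_closedBall_norm_natCast_eq_ball, closedBall_sdiff_ball]
  exact integrableOn_fourPointIntegrand_sphere_one p h₁ h₂ h₃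

lemma setIntegral_fourPointIntegrand_closedBall_one (h₁ : -1 < s₁.re) (h₂ : -1 < s₂.re)
    (h₃ : -1 < s₃.re) (h : -2 < (s₁ + s₂ + s₃).re) :
    ∫ x in closedBall 0 1, fourPointIntegrand p s₁ s₂ s₃ x ∂(padicHaar p).prod (padicHaar p) =
      (∫ x in sphere 0 1, fourPointIntegrand p s₁ s₂ s₃ x ∂(padicHaar p).prod (padicHaar p)) /
        (1 - (p : ℂ) ^ (-2 - s₁ - s₂ - s₃)) := by
  rw [setIntegral_closedBall_of_homogeneous (Nat.cast_ne_zero.2 hp.out.ne_zero)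
    (map_inv_smul_padicHaar_prod p) (fourPointIntegrand_natCast_smul p s₁ s₂ s₃)
    (norm_nnreal_inv_pow_smul_natCast_cpow_neg_lt_one hp.out.one_lt h)
    ((integrableOn_fourPointIntegrand_closedBall_one p h₁ h₂ h₃ h).mono_set Set.sdiff_subset)
    Padic.norm_p_lt_one, padic_prod_closedBall_norm_natCast_eq_ball, closedBall_sdiff_ball,
    nnreal_inv_sq_smul_natCast_cpow_neg_add hp.out.ne_zero]

lemma fourPointDomain_ae_eq_closedBall :
    {x : ℚ_[p] × ℚ_[p] | ‖x.1‖ ≤ 1 ∧ ‖x.2‖ ≤ 1 ∧ x.1 ≠ 0 ∧ x.2 ≠ 0 ∧ x.1 ≠ x.2}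
      =ᵐ[(padicHaar p).prod (padicHaar p)] closedBall 0 1 := by
  have hfst : ∀ᵐ x ∂(padicHaar p).prod (padicHaar p), x.1 ≠ 0 :=
    Measure.quasiMeasurePreserving_fst.ae (Measure.ae_ne (padicHaar p) 0)
  have hsnd : ∀ᵐ x ∂(padicHaar p).prod (padicHaar p), x.2 ≠ 0 :=
    Measure.quasiMeasurePreserving_snd.ae (Measure.ae_ne (padicHaar p) 0)
  have hsub : ∀ᵐ x ∂(padicHaar p).prod (padicHaar p), x.2 - x.1 ≠ 0 :=
    (measurePreserving_prod_sub _ _).quasiMeasurePreserving.ae hsnd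
  rw [Filter.eventuallyEq_set]
  filter_upwards [hfst, hsnd, hsub] with x hx hy hxy
  simp [hx, hy, (sub_ne_zero.1 hxy).symm, Prod.norm_def]

end FourPoint

theorem fourPoint_zeta_formula_general (p : ℕ) [Fact p.Prime] (s₁ s₂ s₃ : ℂ)
    (h₁ : -1 < s₁.re) (h₂ : -1 < s₂.re) (h₃ : -1 < s₃.re) (h : -2 < (s₁ + s₂ + s₃).re) :
    IntegrableOn
        (fun x => (‖x.1‖ : ℂ) ^ s₁ * (‖x.2‖ : ℂ) ^ s₂ * (‖x.1 - x.2‖ : ℂ) ^ s₃)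
        {x : ℚ_[p] × ℚ_[p] | ‖x.1‖ ≤ 1 ∧ ‖x.2‖ ≤ 1 ∧ x.1 ≠ 0 ∧ x.2 ≠ 0 ∧ x.1 ≠ x.2}
        ((padicHaar p).prod (padicHaar p)) ∧
      (∫ x in {x : ℚ_[p] × ℚ_[p] | ‖x.1‖ ≤ 1 ∧ ‖x.2‖ ≤ 1 ∧ x.1 ≠ 0 ∧ x.2 ≠ 0 ∧ x.1 ≠ x.2},
          (‖x.1‖ : ℂ) ^ s₁ * (‖x.2‖ : ℂ) ^ s₂ * (‖x.1 - x.2‖ : ℂ) ^ s₃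
          ∂((padicHaar p).prod (padicHaar p))) =
        ((1 - (p : ℂ)⁻¹) ^ 2 * (p : ℂ) ^ (-1 - s₁) / (1 - (p : ℂ) ^ (-1 - s₁)) +
          (1 - (p : ℂ)⁻¹) ^ 2 * (p : ℂ) ^ (-1 - s₂) / (1 - (p : ℂ) ^ (-1 - s₂)) +
          (p : ℂ) ^ (-2 : ℂ) * ((p : ℂ) - 1) * ((p : ℂ) - 2) +
          (p : ℂ) ^ (-2 - s₃) * ((p : ℂ) - 1) * (1 - (p : ℂ)⁻¹) / (1 - (p : ℂ) ^ (-1 - s₃))) /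
        (1 - (p : ℂ) ^ (-2 - s₁ - s₂ - s₃)) := by
  have hdom := fourPointDomain_ae_eq_closedBall p
  refine ⟨(integrableOn_fourPointIntegrand_closedBall_one p h₁ h₂ h₃ h).congr_set_ae hdom, ?_⟩
  rw [setIntegral_congr_set hdom, ← setIntegral_fourPointIntegrand_sphere_one p h₁ h₂ h₃]
  exact setIntegral_fourPointIntegrand_closedBall_one p h₁ h₂ h₃ h

/-- Explicit formula for `Z(s₁,s₂,s₃)` in the region `Re sᵢ > 0`. -/
theorem fourPoint_zeta_formula (p : ℕ) [Fact p.Prime] (s₁ s₂ s₃ : ℂ)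
    (h₁ : 0 < s₁.re) (h₂ : 0 < s₂.re) (h₃ : 0 < s₃.re) :
    (∫ x in {x : ℚ_[p] × ℚ_[p] | ‖x.1‖ ≤ 1 ∧ ‖x.2‖ ≤ 1 ∧ x.1 ≠ 0 ∧ x.2 ≠ 0 ∧ x.1 ≠ x.2},
        (‖x.1‖ : ℂ) ^ s₁ * (‖x.2‖ : ℂ) ^ s₂ * (‖x.1 - x.2‖ : ℂ) ^ s₃
        ∂((padicHaar p).prod (padicHaar p))) =
      ((1 - (p : ℂ)⁻¹) ^ 2 * (p : ℂ) ^ (-1 - s₁) / (1 - (p : ℂ) ^ (-1 - s₁)) +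
        (1 - (p : ℂ)⁻¹) ^ 2 * (p : ℂ) ^ (-1 - s₂) / (1 - (p : ℂ) ^ (-1 - s₂)) +
        (p : ℂ) ^ (-2 : ℂ) * ((p : ℂ) - 1) * ((p : ℂ) - 2) +
        (p : ℂ) ^ (-2 - s₃) * ((p : ℂ) - 1) * (1 - (p : ℂ)⁻¹) / (1 - (p : ℂ) ^ (-1 - s₃))) /
      (1 - (p : ℂ) ^ (-2 - s₁ - s₂ - s₃)) :=
  (fourPoint_zeta_formula_general p s₁ s₂ s₃ (by linarith) (by linarith) (by linarith)
    (by simp only [Complex.add_re]; linarith)).2
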